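/- If a and b are linear recurrent sequences over a field K whose characteristic polynomials split with roots α_1,...,α_M and β_1,...,β_N, then the Newton product a ⊠ b is a linear recurrent sequence with characteristic polynomial Π_{i=1}^M Π_{j=1}^N (t - (α_i + β_j + α_i β_j)). -/

import Mathlib

open Finset Polynomial

def newton {K : Type*} [Field K] (a b : ℕ → K) : ℕ → K :=
  fun n => ∑ i ∈ Finset.range (n + 1), ∑ j ∈ Finset.range (i + 1),
    (n.choose i : K) * (i.choose j : K) * a i * b (n - j)

def SatisfiesRec {K : Type*} [Field K] (a : ℕ → K) (p : Polynomial K) : Prop :=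
  ∀ n, ∑ i ∈ Finset.range (p.natDegree + 1), p.coeff i * a (n + i) = 0

open scoped TensorProduct

/-- The linear functional on `K[X]` sending `X ^ n` to `a n`. -/
noncomputable def umbral {K : Type*} [Field K] (a : ℕ → K) : K[X] →ₗ[K] K :=
  Polynomial.lsum fun n => LinearMap.mulRight K (a n)

theorem umbral_X_pow {K : Type*} [Field K] (a : ℕ → K) (n : ℕ) : umbral a (X ^ n) = a n := by
  simp [umbral, Polynomial.lsum_apply, Polynomial.X_pow_eq_monomial]

theorem map_aeval_mul_pow {K A : Type*} [Field K] [CommRing A] [Algebra K A] (L : A →ₗ[K] K)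
    (z : A) (p : K[X]) (n : ℕ) :
    L (aeval z p * z ^ n) = ∑ i ∈ Finset.range (p.natDegree + 1), p.coeff i * L (z ^ (n + i)) := by
  rw [Polynomial.aeval_eq_sum_range, Finset.sum_mul, map_sum]
  refine Finset.sum_congr rfl fun i _ => ?_
  rw [smul_mul_assoc, map_smul, smul_eq_mul, pow_add, mul_comm (z ^ i)]

theorem SatisfiesRec.umbral_mul_eq_zero {K : Type*} [Field K] {a : ℕ → K} {p : K[X]}
    (h : SatisfiesRec a p) (f : K[X]) : umbral a (p * f) = 0 := by
  induction f using Polynomial.induction_on' with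
  | add f g hf hg => rw [mul_add, map_add, hf, hg, add_zero]
  | monomial n c =>
    have hn := map_aeval_mul_pow (umbral a) X p n
    simp only [umbral_X_pow, h n, Polynomial.aeval_X_left_apply] at hn
    rw [← Polynomial.smul_X_eq_monomial, mul_smul_comm, map_smul, hn, smul_zero]

/-- The linear functional on `K[X] ⊗ K[X]` sending `X ^ m ⊗ X ^ n` to `a m * b n`. -/
noncomputable def umbralTensor {K : Type*} [Field K] (a b : ℕ → K) : K[X] ⊗[K] K[X] →ₗ[K] K :=
  LinearMap.mul' K K ∘ₗ TensorProduct.map (umbral a) (umbral b)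

theorem umbralTensor_tmul {K : Type*} [Field K] (a b : ℕ → K) (f g : K[X]) :
    umbralTensor a b (f ⊗ₜ g) = umbral a f * umbral b g := by
  simp [umbralTensor]

theorem umbralTensor_mul_eq_zero_left {K : Type*} [Field K] {a : ℕ → K} {p : K[X]}
    (h : SatisfiesRec a p) (b : ℕ → K) (w : K[X] ⊗[K] K[X]) :
    umbralTensor a b (p ⊗ₜ 1 * w) = 0 := by
  induction w using TensorProduct.induction_on with
  | zero => simp
  | tmul f g =>
    rw [Algebra.TensorProduct.tmul_mul_tmul, umbralTensor_tmul, h.umbral_mul_eq_zero, zero_mul]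
  | add v w hv hw => rw [mul_add, map_add, hv, hw, add_zero]

theorem umbralTensor_mul_eq_zero_right {K : Type*} [Field K] (a : ℕ → K) {b : ℕ → K} {q : K[X]}
    (h : SatisfiesRec b q) (w : K[X] ⊗[K] K[X]) :
    umbralTensor a b (1 ⊗ₜ q * w) = 0 := by
  induction w using TensorProduct.induction_on with
  | zero => simp
  | tmul f g =>
    rw [Algebra.TensorProduct.tmul_mul_tmul, umbralTensor_tmul, h.umbral_mul_eq_zero, mul_zero]
  | add v w hv hw => rw [mul_add, map_add, hv, hw, add_zero]

theorem umbralTensor_pow {K : Type*} [Field K] (a b : ℕ → K) (n : ℕ) :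
    umbralTensor a b ((X ⊗ₜ 1 + 1 ⊗ₜ X + X ⊗ₜ 1 * 1 ⊗ₜ X) ^ n) = newton a b n := by
  have hz : (X ⊗ₜ 1 + 1 ⊗ₜ X + X ⊗ₜ 1 * 1 ⊗ₜ X : K[X] ⊗[K] K[X])
      = X ⊗ₜ 1 * (1 + 1 ⊗ₜ X) + 1 ⊗ₜ X := by ring
  rw [hz, add_pow, map_sum, newton]
  refine Finset.sum_congr rfl fun i hi => ?_
  rw [mul_pow, add_pow, Finset.mul_sum, Finset.sum_mul, Finset.sum_mul, map_sum]
  refine Finset.sum_congr rfl fun j hj => ?_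
  have hin : i ≤ n := Nat.lt_succ_iff.mp (Finset.mem_range.mp hi)
  have hji : j ≤ i := Nat.lt_succ_iff.mp (Finset.mem_range.mp hj)
  have hterm : ((X ⊗ₜ 1 : K[X] ⊗[K] K[X]) ^ i
      * (1 ^ j * (1 ⊗ₜ X : K[X] ⊗[K] K[X]) ^ (i - j) * (i.choose j : K[X] ⊗[K] K[X]))
      * (1 ⊗ₜ X : K[X] ⊗[K] K[X]) ^ (n - i) * (n.choose i : K[X] ⊗[K] K[X]))
      = ((n.choose i : K) * (i.choose j : K)) •
        ((X ^ i : K[X]) ⊗ₜ[K] (X ^ (n - j) : K[X])) := by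
    have hexp : n - j = (i - j) + (n - i) := by omega
    have hXY : (X ^ i : K[X]) ⊗ₜ[K] (X ^ (n - j) : K[X])
        = (X ⊗ₜ 1 : K[X] ⊗[K] K[X]) ^ i
          * ((1 ⊗ₜ X : K[X] ⊗[K] K[X]) ^ (i - j) * (1 ⊗ₜ X : K[X] ⊗[K] K[X]) ^ (n - i)) := by
      rw [← pow_add, ← hexp]
      simp [Algebra.TensorProduct.tmul_pow]
    rw [hXY, ← Nat.cast_mul, Nat.cast_smul_eq_nsmul, nsmul_eq_mul, Nat.cast_mul]
    ring
  rw [hterm, map_smul, umbralTensor_tmul, umbral_X_pow, umbral_X_pow, smul_eq_mul]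
  ring

/-- If each `g i` lies in the ideal `(f i, v)`, then `∏ g i` lies in `(∏ f i, v)`. -/
theorem exists_prod_eq_prod_mul_add {A ι : Type*} [CommRing A] (s : Finset ι) (v : A) (f g : ι → A)
    (h : ∀ i, ∃ r t, g i = f i * r + v * t) :
    ∃ r t, ∏ i ∈ s, g i = (∏ i ∈ s, f i) * r + v * t := by
  classical
  induction s using Finset.induction_on with
  | empty => exact ⟨1, 0, by simp⟩
  | insert i s hi ih =>
    obtain ⟨r, t, hrt⟩ := ih
    obtain ⟨r', t', hrt'⟩ := h i
    refine ⟨r' * r, f i * r' * t + t' * ((∏ i ∈ s, f i) * r + v * t), ?_⟩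
    rw [Finset.prod_insert hi, Finset.prod_insert hi, hrt, hrt']
    ring

/-- The product of all `z - (α i + β j + α i * β j)`, where `z = x + y + x * y`, lies in the ideal
generated by `∏ (x - α i)` and `∏ (y - β j)`. -/
theorem exists_prod_prod_sub_eq {A ι κ : Type*} [CommRing A] (s : Finset ι) (t : Finset κ)
    (x y : A) (α : ι → A) (β : κ → A) :
    ∃ r w, ∏ i ∈ s, ∏ j ∈ t, (x + y + x * y - (α i + β j + α i * β j))
      = (∏ i ∈ s, (x - α i)) * r + (∏ j ∈ t, (y - β j)) * w := by
  refine exists_prod_eq_prod_mul_add s _ _ _ fun i => ?_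
  obtain ⟨r, w, h⟩ := exists_prod_eq_prod_mul_add t (x - α i) (fun j => y - β j)
    (fun j => x + y + x * y - (α i + β j + α i * β j))
    fun j => ⟨1 + α i, 1 + y, by ring⟩
  exact ⟨w, r, by rw [h]; ring⟩

/-- If `a` and `b` recur with characteristic polynomials splitting with roots
`α_i` and `β_j`, then `a ⊠ b` recurs with characteristic polynomial
`∏_{i,j} (t - (α_i + β_j + α_i β_j))`. -/
theorem newton_linear_recurrent {K : Type*} [Field K] {M N : ℕ} (hM : 0 < M) (hN : 0 < N)
    (a b : ℕ → K) (α : Fin M → K) (β : Fin N → K)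
    (ha : SatisfiesRec a (∏ i, (X - C (α i))))
    (hb : SatisfiesRec b (∏ j, (X - C (β j)))) :
    SatisfiesRec (newton a b) (∏ i, ∏ j, (X - C (α i + β j + α i * β j))) := by
  intro n
  set x : K[X] ⊗[K] K[X] := X ⊗ₜ 1
  set y : K[X] ⊗[K] K[X] := 1 ⊗ₜ X
  have hP : (∏ i, (X - C (α i))) ⊗ₜ[K] (1 : K[X]) = ∏ i, (x - algebraMap K _ (α i)) := by
    change Algebra.TensorProduct.includeLeft (R := K) (S := K) (B := K[X]) _ = _
    rw [map_prod]
    refine Finset.prod_congr rfl fun i _ => ?_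
    rw [map_sub, ← Polynomial.algebraMap_eq, AlgHom.commutes]
    rfl
  have hQ : (1 : K[X]) ⊗ₜ[K] (∏ j, (X - C (β j))) = ∏ j, (y - algebraMap K _ (β j)) := by
    change Algebra.TensorProduct.includeRight (R := K) (A := K[X]) _ = _
    rw [map_prod]
    refine Finset.prod_congr rfl fun j _ => ?_
    rw [map_sub, ← Polynomial.algebraMap_eq, AlgHom.commutes]
    rfl
  obtain ⟨r, w, h⟩ := exists_prod_prod_sub_eq Finset.univ Finset.univ x y
    (fun i => algebraMap K _ (α i)) (fun j => algebraMap K _ (β j))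
  simp only [← umbralTensor_pow]
  rw [← map_aeval_mul_pow (umbralTensor a b)]
  simp only [map_prod, map_sub, aeval_X, aeval_C, map_add, map_mul]
  rw [h, ← hP, ← hQ, add_mul, mul_assoc, mul_assoc, map_add, umbralTensor_mul_eq_zero_left ha,
    umbralTensor_mul_eq_zero_right a hb, add_zero]
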